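/- arXiv:1307.4385 — 2 statements merged into one kernel-verified Lean document; each statement's English description precedes it below -/
import Mathlib

section
/- If X is an infinite-dimensional Banach space and finitely many closed balls cover the unit sphere of X, then at least one of the balls contains an antipodal pair (y, −y) of unit vectors. -/
namespace BUproof

open Finsupp

/-- mod 2 chains on lists of points -/
abbrev Ch (E : Type*) := List E →₀ ZMod 2

noncomputable section

variable {E : Type*}

/-- extend linearly -/
def ext (f : List E → Ch E) : Ch E →ₗ[ZMod 2] Ch E := Finsupp.linearCombination (ZMod 2) f

@[simp] lemma ext_single (f : List E → Ch E) (l : List E) : ext f (single l 1) = f l := by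
  simp [ext]

/-- pair a cochain with a chain -/
def ev (W : List E → ZMod 2) : Ch E →ₗ[ZMod 2] ZMod 2 := Finsupp.linearCombination (ZMod 2) W

@[simp] lemma ev_single (W : List E → ZMod 2) (l : List E) : ev W (single l 1) = W l := by
  simp [ev]

def cone (x : E) : Ch E →ₗ[ZMod 2] Ch E := ext (fun l => single (x :: l) 1)

@[simp] lemma cone_single (x : E) (l : List E) : cone x (single l 1) = single (x :: l) 1 := by
  simp [cone]

def mp (φ : E → E) : Ch E →ₗ[ZMod 2] Ch E := ext (fun l => single (l.map φ) 1)

@[simp] lemma mp_single (φ : E → E) (l : List E) : mp φ (single l 1) = single (l.map φ) 1 := by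
  simp [mp]

def bd : List E → Ch E
  | [] => 0
  | x :: l => single l 1 + cone x (bd l)

def D : Ch E →ₗ[ZMod 2] Ch E := ext bd

@[simp] lemma D_single (l : List E) : D (single l 1) = bd l := by simp [D]

lemma two_ch (c : Ch E) : c + c = 0 := by
  ext l; simpa using CharTwo.add_self_eq_zero (c l)

lemma hom_ext {M : Type*} [AddCommMonoid M] [Module (ZMod 2) M] {f g : Ch E →ₗ[ZMod 2] M}
    (h : ∀ l, f (single l 1) = g (single l 1)) (c : Ch E) : f c = g c := by
  have : f = g := by
    apply Finsupp.lhom_ext'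
    intro l
    apply LinearMap.ext_ring
    simpa using h l
  rw [this]

lemma D_cone (x : E) (c : Ch E) : D (cone x c) = c + cone x (D c) := by
  have := hom_ext (f := D ∘ₗ cone x) (g := LinearMap.id + cone x ∘ₗ D) (by
    intro l; simp [bd]) c
  simpa using this

lemma D_D (c : Ch E) : D (D c) = 0 := by
  have := hom_ext (f := D ∘ₗ D) (g := (0 : Ch E →ₗ[ZMod 2] Ch E)) (by
    intro l
    simp only [LinearMap.comp_apply, D_single, LinearMap.zero_apply]
    induction l with
    | nil => simp [bd]
    | cons x l ih => simp [bd, D_cone, ih, two_ch]) c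
  simpa using this

lemma mp_cone (φ : E → E) (x : E) (c : Ch E) : mp φ (cone x c) = cone (φ x) (mp φ c) := by
  have := hom_ext (f := mp φ ∘ₗ cone x) (g := cone (φ x) ∘ₗ mp φ) (by
    intro l; simp) c
  simpa using this

lemma D_mp (φ : E → E) (c : Ch E) : D (mp φ c) = mp φ (D c) := by
  have := hom_ext (f := D ∘ₗ mp φ) (g := mp φ ∘ₗ D) (by
    intro l
    simp only [LinearMap.comp_apply, D_single, mp_single]
    induction l with
    | nil => simp [bd]
    | cons x l ih => simp [bd, mp_cone, ih]) c
  simpa using this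

lemma mp_mp (φ ψ : E → E) (c : Ch E) : mp φ (mp ψ c) = mp (φ ∘ ψ) c := by
  have := hom_ext (f := mp φ ∘ₗ mp ψ) (g := mp (φ ∘ ψ)) (by
    intro l; simp) c
  simpa using this

lemma mp_id (c : Ch E) : mp id c = c := by
  have := hom_ext (f := mp (id : E → E)) (g := LinearMap.id) (by
    intro l; simp) c
  simpa using this

/-- prism operator -/
def pr (φ ψ : E → E) : List E → Ch E
  | [] => 0
  | x :: l => single (φ x :: ψ x :: l.map ψ) 1 + cone (φ x) (pr φ ψ l)

def P (φ ψ : E → E) : Ch E →ₗ[ZMod 2] Ch E := ext (pr φ ψ)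

@[simp] lemma P_single (φ ψ : E → E) (l : List E) : P φ ψ (single l 1) = pr φ ψ l := by simp [P]

lemma P_cone (φ ψ : E → E) (x : E) (c : Ch E) :
    P φ ψ (cone x c) = cone (φ x) (cone (ψ x) (mp ψ c)) + cone (φ x) (P φ ψ c) := by
  have := hom_ext (f := P φ ψ ∘ₗ cone x)
    (g := cone (φ x) ∘ₗ cone (ψ x) ∘ₗ mp ψ + cone (φ x) ∘ₗ P φ ψ) (by
    intro l; simp [pr]) c
  simpa using this

lemma D_P (φ ψ : E → E) (c : Ch E) :
    D (P φ ψ c) = mp ψ c + mp φ c + P φ ψ (D c) := by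
  have := hom_ext (f := D ∘ₗ P φ ψ) (g := mp ψ + mp φ + P φ ψ ∘ₗ D) (by
    intro l
    simp only [LinearMap.comp_apply, LinearMap.add_apply, D_single, mp_single, P_single]
    induction l with
    | nil => simp [bd, pr, two_ch]
    | cons x l ih =>
      have h1 : bd (l.map ψ) = mp ψ (bd l) := by
        have := D_mp ψ (single l 1); simpa using this
      simp only [pr, bd, map_add, D_single, D_cone, ih, P_cone, P_single, cone_single, h1,
        List.map_cons]
      have h2 := two_ch (single (φ x :: l.map ψ) 1)
      generalize cone (φ x) (cone (ψ x) (mp ψ (bd l))) = a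
      generalize cone (φ x) (P φ ψ (bd l)) = b
      generalize (single (φ x :: l.map ψ) (1 : ZMod 2)) = d at *
      rw [← sub_eq_zero]
      abel_nf
      rw [two_smul]; exact h2) c
  simpa using this

/-- chains spanned by lists in `A` -/
def S (A : Set (List E)) : Submodule (ZMod 2) (Ch E) :=
  Submodule.span (ZMod 2) ((fun l => single l 1) '' A)

lemma single_mem {A : Set (List E)} {l : List E} (h : l ∈ A) : (single l 1 : Ch E) ∈ S A :=
  Submodule.subset_span ⟨l, h, rfl⟩

lemma map_mem {A B : Set (List E)} (T : Ch E →ₗ[ZMod 2] Ch E)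
    (h : ∀ l ∈ A, T (single l 1) ∈ S B) {c : Ch E} (hc : c ∈ S A) : T c ∈ S B := by
  have : S A ≤ (S B).comap T := by
    rw [S, Submodule.span_le]
    rintro _ ⟨l, hl, rfl⟩
    exact h l hl
  exact this hc

lemma S_mono {A B : Set (List E)} (h : A ⊆ B) : S A ≤ S B :=
  Submodule.span_mono (Set.image_mono h)

lemma ev_eq_zero {A : Set (List E)} (W : List E → ZMod 2) (h : ∀ l ∈ A, W l = 0)
    {c : Ch E} (hc : c ∈ S A) : ev W c = 0 := by
  have : S A ≤ LinearMap.ker (ev W) := by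
    rw [S, Submodule.span_le]
    rintro _ ⟨l, hl, rfl⟩
    simpa using h l hl
  exact this hc

lemma pr_mem (φ ψ : E → E) (l : List E) :
    pr φ ψ l ∈ S {l' | ∀ x ∈ l', ∃ y ∈ l, x = φ y ∨ x = ψ y} := by
  induction l with
  | nil => simp [pr]
  | cons x l ih =>
    refine Submodule.add_mem _ (single_mem ?_) (map_mem _ ?_ ih)
    · intro z hz
      simp only [List.mem_cons, List.mem_map] at hz ⊢
      rcases hz with rfl | rfl | ⟨y, hy, rfl⟩
      · exact ⟨x, Or.inl rfl, Or.inl rfl⟩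
      · exact ⟨x, Or.inl rfl, Or.inr rfl⟩
      · exact ⟨y, Or.inr hy, Or.inr rfl⟩
    · intro l' hl'
      rw [cone_single]
      apply single_mem
      intro z hz
      simp only [List.mem_cons] at hz ⊢
      rcases hz with rfl | hz
      · exact ⟨x, Or.inl rfl, Or.inl rfl⟩
      · obtain ⟨y, hy, h⟩ := hl' z hz
        exact ⟨y, Or.inr hy, h⟩

/-- small lists in a set -/
def sm [PseudoMetricSpace E] (K : Set E) (δ : ℝ) : Set (List E) :=
  {l | (∀ x ∈ l, x ∈ K) ∧ ∀ x ∈ l, ∀ y ∈ l, dist x y ≤ δ}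

lemma fill [NormedAddCommGroup E] [NormedSpace ℝ E] {K K' : Set E} (p : E)
    (hK : ∀ x ∈ K, ∀ t : ℝ, 0 ≤ t → t ≤ 1 → x + t • (p - x) ∈ K') (hp : p ∈ K')
    (hb : ∀ x ∈ K, ‖p - x‖ ≤ 2)
    {δ ε : ℝ} (hδ : 0 ≤ δ) (hε : 0 < ε) {z : Ch E} (hz : z ∈ S (sm K δ)) (hDz : D z = 0) :
    ∃ c ∈ S (sm K' (δ + ε)), D c = z := by
  obtain ⟨m, hm⟩ := exists_nat_gt (2 / ε)
  have hm0 : (0 : ℝ) < m := lt_trans (by positivity) hm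
  have hstep : 1 / (m : ℝ) * 2 ≤ ε := by
    rw [div_lt_iff₀ hε] at hm
    rw [one_div, inv_mul_le_iff₀ hm0]; exact hm.le
  set φ : ℕ → E → E := fun t x => x + ((t : ℝ) / m) • (p - x) with hφ
  have t01 : ∀ t : ℕ, t ≤ m → 0 ≤ (t : ℝ) / m ∧ (t : ℝ) / m ≤ 1 := by
    intro t ht
    refine ⟨by positivity, ?_⟩
    rw [div_le_one hm0]; exact_mod_cast ht
  have d1 : ∀ t : ℕ, t ≤ m → ∀ x y, dist x y ≤ δ → dist (φ t x) (φ t y) ≤ δ := by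
    intro t ht x y hxy
    obtain ⟨h0, h1⟩ := t01 t ht
    have : φ t x - φ t y = (1 - (t : ℝ) / m) • (x - y) := by
      simp only [hφ]; module
    rw [dist_eq_norm, this, norm_smul, Real.norm_of_nonneg (by linarith), ← dist_eq_norm]
    calc _ ≤ 1 * dist x y := by gcongr; linarith
      _ ≤ δ := by linarith
  have d2 : ∀ t : ℕ, ∀ x ∈ K, dist (φ t x) (φ (t + 1) x) ≤ ε := by
    intro t x hx
    have : φ t x - φ (t + 1) x = (-(1 / (m : ℝ))) • (p - x) := by
      simp only [hφ]; push_cast; rw [add_div]; module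
    rw [dist_eq_norm, this, norm_smul, norm_neg, Real.norm_of_nonneg (by positivity)]
    refine le_trans ?_ hstep
    gcongr
    exact hb x hx
  have d3 : ∀ t : ℕ, t + 1 ≤ m → ∀ x ∈ K, ∀ y ∈ K, dist x y ≤ δ →
      dist (φ t x) (φ (t + 1) y) ≤ δ + ε := by
    intro t ht x hx y hy hxy
    exact (dist_triangle _ (φ t y) _).trans
      (add_le_add (d1 t (by omega) x y hxy) (d2 t y hy))
  have key : ∀ t : ℕ, t ≤ m → ∃ c ∈ S (sm K' (δ + ε)), D c = z + mp (φ t) z := by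
    intro t
    induction t with
    | zero =>
      intro _
      refine ⟨0, Submodule.zero_mem _, ?_⟩
      have : φ 0 = id := by funext x; simp [hφ]
      rw [this, mp_id, two_ch, map_zero]
    | succ t ih =>
      intro ht
      obtain ⟨c, hc, hDc⟩ := ih (by omega)
      refine ⟨c + P (φ t) (φ (t + 1)) z, Submodule.add_mem _ hc (map_mem _ ?_ hz), ?_⟩
      · intro l hl
        rw [P_single]
        refine S_mono ?_ (pr_mem _ _ l)
        intro l' hl'
        refine ⟨?_, ?_⟩
        · intro x hx
          obtain ⟨y, hy, rfl | rfl⟩ := hl' x hx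
          · exact hK y (hl.1 y hy) _ (t01 t (by omega)).1 (t01 t (by omega)).2
          · exact hK y (hl.1 y hy) _ (t01 (t + 1) (by omega)).1 (t01 (t + 1) (by omega)).2
        · intro x hx x' hx'
          obtain ⟨y, hy, rfl | rfl⟩ := hl' x hx <;>
          obtain ⟨y', hy', rfl | rfl⟩ := hl' x' hx'
          · exact (d1 t (by omega) _ _ (hl.2 y hy y' hy')).trans (by linarith)
          · exact d3 t ht _ (hl.1 y hy) _ (hl.1 y' hy') (hl.2 y hy y' hy')
          · rw [dist_comm]
            exact d3 t ht _ (hl.1 y' hy') _ (hl.1 y hy) (hl.2 y' hy' y hy)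
          · exact (d1 (t + 1) ht _ _ (hl.2 y hy y' hy')).trans (by linarith)
      · rw [map_add, hDc, D_P, hDz, map_zero, add_zero]
        have := two_ch (mp (φ t) z)
        rw [show z + mp (φ t) z + (mp (φ (t + 1)) z + mp (φ t) z)
          = z + mp (φ (t + 1)) z + (mp (φ t) z + mp (φ t) z) by abel, this, add_zero]
  obtain ⟨c, hc, hDc⟩ := key m le_rfl
  have hφm : ∀ x, φ m x = p := by
    intro x; simp [hφ, div_self hm0.ne']
  refine ⟨c + cone p (mp (φ m) z), Submodule.add_mem _ hc
    (map_mem (cone p ∘ₗ mp (φ m)) ?_ hz), ?_⟩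
  · intro l hl
    simp only [LinearMap.comp_apply, mp_single, cone_single]
    apply single_mem
    have : ∀ x ∈ p :: l.map (φ m), x = p := by
      intro x hx
      simp only [List.mem_cons, List.mem_map] at hx
      rcases hx with rfl | ⟨y, _, rfl⟩
      · rfl
      · exact hφm y
    refine ⟨fun x hx => by rw [this x hx]; exact hp, fun x hx y hy => ?_⟩
    rw [this x hx, this y hy, dist_self]; linarith
  · rw [map_add, hDc, D_cone, D_mp, hDz, map_zero, map_zero, add_zero, add_assoc, two_ch, add_zero]

/-- multiply a cochain by a 0-cochain in front -/
def fr (s : E → ZMod 2) (W : List E → ZMod 2) : List E → ZMod 2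
  | [] => 0
  | x :: l => s x * W (x :: l)

def W (s : ℕ → E → ZMod 2) : ℕ → List E → ZMod 2
  | 0 => fun l => if l.length = 1 then 1 else 0
  | k + 1 => fun l => ev (fr (s k) (W s k)) (bd l)

lemma W_nil (s : ℕ → E → ZMod 2) (k : ℕ) : W s k [] = 0 := by
  cases k <;> simp [W, bd]

lemma ev_W_succ (s : ℕ → E → ZMod 2) (k : ℕ) (c : Ch E) :
    ev (W s (k + 1)) c = ev (fr (s k) (W s k)) (D c) := by
  have := hom_ext (f := ev (W s (k + 1))) (g := ev (fr (s k) (W s k)) ∘ₗ D) (by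
    intro l; simp [W]) c
  simpa using this

lemma ev_W_D (s : ℕ → E → ZMod 2) (k : ℕ) (c : Ch E) : ev (W s k) (D c) = 0 := by
  cases k with
  | succ k => rw [ev_W_succ, D_D, map_zero]
  | zero =>
    have := hom_ext (f := ev (W s 0) ∘ₗ D) (g := (0 : Ch E →ₗ[ZMod 2] ZMod 2)) (by
      intro l
      simp only [LinearMap.comp_apply, D_single, LinearMap.zero_apply]
      match l with
      | [] => simp [bd]
      | [x] => simp [bd, W]
      | [x, y] => simp [bd, W]; exact CharTwo.add_self_eq_zero 1
      | x :: y :: z :: l =>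
        have h : ∀ (a b : E) (c : Ch E), ev (W s 0) (cone a (cone b c)) = 0 := by
          intro a b c
          have := hom_ext (f := ev (W s 0) ∘ₗ cone a ∘ₗ cone b)
            (g := (0 : Ch E →ₗ[ZMod 2] ZMod 2)) (by intro l; simp [W]) c
          simpa using this
        simp [bd, h]
        simp [W]) c
    simpa using this

lemma ev_fr_cone (s : E → ZMod 2) (V : List E → ZMod 2) (x : E) (c : Ch E) :
    ev (fr s V) (cone x c) = s x * ev V (cone x c) := by
  have := hom_ext (f := ev (fr s V) ∘ₗ cone x) (g := s x • (ev V ∘ₗ cone x)) (by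
    intro l; simp [fr]) c
  simpa using this

lemma W_cons (s : ℕ → E → ZMod 2) (k : ℕ) (x y : E) (l : List E) :
    W s (k + 1) (x :: y :: l) = (s k y + s k x) * W s k (y :: l) := by
  have h := ev_W_D s k (single (x :: y :: l) 1)
  rw [D_single, bd, map_add, ev_single] at h
  have h' : ev (W s k) (cone x (bd (y :: l))) = W s k (y :: l) := by
    have h2 : ∀ a b : ZMod 2, a + b = 0 → b = a := by decide
    exact h2 _ _ h
  show ev (fr (s k) (W s k)) (bd (x :: y :: l)) = _
  rw [bd, map_add, ev_single, ev_fr_cone, h']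
  simp only [fr]; ring

lemma W_single (s : ℕ → E → ZMod 2) (k : ℕ) (x : E) : W s (k + 1) [x] = 0 := by
  simp [W, bd, fr]

lemma W_ne (s : ℕ → E → ZMod 2) (k : ℕ) (l : List E) (h : W s k l ≠ 0) :
    ∀ i < k, ∃ x ∈ l, ∃ y ∈ l, s i x ≠ s i y := by
  induction k generalizing l with
  | zero => intro i hi; omega
  | succ k ih =>
    match l with
    | [] => exact absurd (W_nil s _) h
    | [x] => exact absurd (W_single s _ _) h
    | x :: y :: l =>
      rw [W_cons] at h
      intro i hi
      rcases Nat.lt_succ_iff_lt_or_eq.mp hi with hi | rfl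
      · obtain ⟨a, ha, b, hb, hab⟩ := ih _ (right_ne_zero_of_mul h) i hi
        exact ⟨a, List.mem_cons_of_mem _ ha, b, List.mem_cons_of_mem _ hb, hab⟩
      · refine ⟨x, by simp, y, by simp, fun he => left_ne_zero_of_mul h ?_⟩
        rw [he]; exact CharTwo.add_self_eq_zero _

/-- invariance under the antipodal map, on lists in `A` -/
lemma ev_W_neg [AddGroup E] {K : Set E} (s : ℕ → E → ZMod 2)
    (hs : ∀ k, ∀ x ∈ K, s k (-x) = s k x + 1) (k : ℕ) (l : List E) (hl : ∀ x ∈ l, x ∈ K) :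
    W s k (l.map Neg.neg) = W s k l := by
  induction k generalizing l with
  | zero => simp [W]
  | succ k ih =>
    match l with
    | [] => rfl
    | [x] => simp [W_single]
    | x :: y :: l =>
      have := ih (y :: l) (fun z hz => hl z (List.mem_cons_of_mem _ hz))
      simp only [List.map_cons] at this ⊢
      rw [W_cons, W_cons, this, hs k x (hl x (by simp)), hs k y (hl y (by simp))]
      have h2 : ∀ a b : ZMod 2, a + 1 + (b + 1) = a + b := by decide
      rw [h2]

lemma ev_fr_neg [AddGroup E] {K : Set E} (s : ℕ → E → ZMod 2)
    (hs : ∀ k, ∀ x ∈ K, s k (-x) = s k x + 1) (k : ℕ) {c : Ch E}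
    (hc : c ∈ S {l | ∀ x ∈ l, x ∈ K}) :
    ev (fr (s k) (W s k)) (c + mp Neg.neg c) = ev (W s k) c := by
  have : S {l | ∀ x ∈ l, x ∈ K} ≤ LinearMap.eqLocus
      (ev (fr (s k) (W s k)) ∘ₗ (LinearMap.id + mp Neg.neg)) (ev (W s k)) := by
    rw [S, Submodule.span_le]
    rintro _ ⟨l, hl, rfl⟩
    simp only [SetLike.mem_coe, LinearMap.mem_eqLocus, LinearMap.comp_apply, LinearMap.add_apply,
      LinearMap.id_apply, map_add, mp_single, ev_single]
    match l with
    | [] => simp [fr, W_nil]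
    | x :: l =>
      have h := ev_W_neg s hs k (x :: l) hl
      simp only [List.map_cons] at h ⊢
      simp only [fr, h, hs k x (hl x (by simp))]
      have h2 : ∀ a b : ZMod 2, a * b + (a + 1) * b = b := by decide
      rw [h2]
  exact this hc

/-- skeleta of the cross-polytope -/
def KK (n k : ℕ) : Set (Fin (n + 1) → ℝ) :=
  {a | ∑ i, |a i| = 1 ∧ ∀ i, k < i.val → a i = 0}

lemma KK_norm {n k : ℕ} {a : Fin (n + 1) → ℝ} (ha : a ∈ KK n k) : ‖a‖ ≤ 1 := by
  rw [pi_norm_le_iff_of_nonneg zero_le_one]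
  intro i
  rw [← ha.1]
  exact Finset.single_le_sum (f := fun i => |a i|) (fun i _ => abs_nonneg _) (Finset.mem_univ i)

lemma KK_neg {n k : ℕ} {a : Fin (n + 1) → ℝ} (ha : a ∈ KK n k) : -a ∈ KK n k :=
  ⟨by simpa using ha.1, fun i hi => by simpa using ha.2 i hi⟩

lemma KK_single {n k : ℕ} (hk : k < n + 1) : (Pi.single ⟨k, hk⟩ 1 : Fin (n + 1) → ℝ) ∈ KK n k := by
  constructor
  · rw [Finset.sum_eq_single ⟨k, hk⟩] <;> simp +contextual [Pi.single_apply]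
  · intro i hi
    rw [Pi.single_apply, if_neg]
    rintro rfl
    simp at hi

lemma KK_join {n k : ℕ} (hk : k + 1 < n + 1) {a : Fin (n + 1) → ℝ} (ha : a ∈ KK n k) (t : ℝ)
    (h0 : 0 ≤ t) (h1 : t ≤ 1) :
    a + t • ((Pi.single ⟨k + 1, hk⟩ 1 : Fin (n + 1) → ℝ) - a) ∈ KK n (k + 1) := by
  have hp := KK_single (n := n) hk
  set p : Fin (n + 1) → ℝ := Pi.single ⟨k + 1, hk⟩ 1 with hpdef
  constructor
  · have : ∀ i, |(a + t • (p - a)) i| = (1 - t) * |a i| + t * |p i| := by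
      intro i
      by_cases hi : i = ⟨k + 1, hk⟩
      · have : a i = 0 := ha.2 i (by rw [hi]; simp)
        simp [this, abs_mul, abs_of_nonneg h0]
      · have : p i = 0 := by rw [hpdef, Pi.single_apply, if_neg hi]
        simp only [Pi.add_apply, Pi.smul_apply, Pi.sub_apply, this, smul_eq_mul]
        rw [show a i + t * (0 - a i) = (1 - t) * a i by ring, abs_mul,
          abs_of_nonneg (by linarith : 0 ≤ 1 - t)]
        simp
    rw [Finset.sum_congr rfl (fun i _ => this i), Finset.sum_add_distrib, ← Finset.mul_sum,
      ← Finset.mul_sum, ha.1, hp.1]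
    ring
  · intro i hi
    have h1 := ha.2 i (by omega)
    have h2 := hp.2 i hi
    simp [h1, h2]

lemma KK_mono {n k : ℕ} (hk : k ≤ n) : KK n k ⊆ KK n n :=
  fun _ ha => ⟨ha.1, fun i hi => ha.2 i (by omega)⟩

lemma exists_chain {n : ℕ} (s : ℕ → (Fin (n + 1) → ℝ) → ZMod 2)
    (hs : ∀ k, ∀ x ∈ KK n n, s k (-x) = s k x + 1) (k : ℕ) (hk : k ≤ n) :
    ∀ ε : ℝ, 0 < ε → ∃ h ∈ S (sm (KK n k) ε), D (h + mp Neg.neg h) = 0 ∧ ev (W s k) h = 1 := by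
  induction k with
  | zero =>
    intro ε hε
    refine ⟨single [Pi.single ⟨0, by omega⟩ 1] 1, single_mem ⟨?_, ?_⟩, ?_, ?_⟩
    · intro x hx
      simp only [List.mem_singleton] at hx
      rw [hx]; exact KK_single (by omega)
    · intro x hx y hy
      simp only [List.mem_singleton] at hx hy
      rw [hx, hy, dist_self]; exact hε.le
    · simp [bd, two_ch]
    · simp [W]
  | succ k ih =>
    intro ε hε
    obtain ⟨h, hh, hD, hW⟩ := ih (by omega) (ε / 2) (by positivity)
    have hz : h + mp Neg.neg h ∈ S (sm (KK n k) (ε / 2)) := by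
      refine Submodule.add_mem _ hh (map_mem _ ?_ hh)
      intro l hl
      rw [mp_single]
      apply single_mem
      refine ⟨?_, ?_⟩
      · intro x hx
        obtain ⟨y, hy, rfl⟩ := List.mem_map.mp hx
        exact KK_neg (hl.1 y hy)
      · intro x hx x' hx'
        obtain ⟨y, hy, rfl⟩ := List.mem_map.mp hx
        obtain ⟨y', hy', rfl⟩ := List.mem_map.mp hx'
        rw [dist_neg_neg]
        exact hl.2 y hy y' hy'
    have hp := KK_single (n := n) (k := k + 1) (by omega)
    obtain ⟨c, hc, hDc⟩ := fill (K := KK n k) (K' := KK n (k + 1))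
      (Pi.single ⟨k + 1, by omega⟩ 1) (fun x hx t h0 h1 => KK_join (by omega) hx t h0 h1) hp
      (fun x hx => (norm_sub_le _ _).trans (by linarith [KK_norm hp, KK_norm hx]))
      (by positivity) (half_pos hε) hz hD
    rw [add_halves] at hc
    refine ⟨c, hc, ?_, ?_⟩
    · rw [map_add, D_mp, hDc, map_add, mp_mp]
      have : (Neg.neg ∘ Neg.neg : (Fin (n + 1) → ℝ) → _) = id := by funext x; simp
      rw [this, mp_id, add_comm (mp _ h), two_ch]
    · rw [ev_W_succ, hDc, ev_fr_neg s hs k _, hW]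
      have hsub : sm (KK n k) (ε / 2) ⊆ {l | ∀ x ∈ l, x ∈ KK n n} := by
        intro l hl x hx
        exact KK_mono (by omega) (hl.1 x hx)
      exact S_mono hsub hh

lemma exists_odd_sign (E : Type*) [AddCommGroup E] [Module ℝ E] :
    ∃ t : E → ZMod 2, ∀ x, x ≠ 0 → t (-x) = t x + 1 := by
  classical
  refine ⟨fun x => if WellOrderingRel x (-x) then 1 else 0, fun x hx => ?_⟩
  have hne : x ≠ -x := by
    intro h
    have h2 : (2 : ℝ) • x = 0 := by
      rw [two_smul]; nth_rewrite 2 [h]; exact add_neg_cancel x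
    exact hx ((smul_eq_zero.mp h2).resolve_left two_ne_zero)
  simp only [neg_neg]
  by_cases h : WellOrderingRel x (-x)
  · have h' : ¬ WellOrderingRel (-x) x := asymm h
    rw [if_pos h, if_neg h']; decide
  · have h' : WellOrderingRel (-x) x := by
      rcases trichotomous_of WellOrderingRel x (-x) with h1 | h1 | h1
      · exact absurd h1 h
      · exact absurd h1 hne
      · exact h1
    rw [if_neg h, if_pos h']; decide

lemma KK_ne {n k : ℕ} {a : Fin (n + 1) → ℝ} (ha : a ∈ KK n k) : a ≠ 0 := by
  rintro rfl
  simpa using ha.1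

lemma KK_compact (n : ℕ) : IsCompact (KK n n) := by
  apply Metric.isCompact_of_isClosed_isBounded
  · have : KK n n = {a | ∑ i, |a i| = 1} := by
      ext a
      exact ⟨fun h => h.1, fun h => ⟨h, fun i hi => by omega⟩⟩
    rw [this]
    exact isClosed_eq (by fun_prop) continuous_const
  · exact (Metric.isBounded_closedBall (x := (0 : Fin (n + 1) → ℝ)) (r := 1)).subset
      (fun a ha => by simpa using KK_norm ha)

/-- Borsuk-Ulam -/
theorem borsuk_ulam (n : ℕ) (f : (Fin (n + 1) → ℝ) → Fin n → ℝ) (hf : Continuous f)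
    (hodd : ∀ x, f (-x) = -f x) : ∃ x, x ≠ 0 ∧ f x = 0 := by
  classical
  by_contra! hcon
  have hKne : (KK n n).Nonempty := ⟨_, KK_single (k := n) (by omega)⟩
  obtain ⟨x₀, hx₀, hmin⟩ := (KK_compact n).exists_isMinOn hKne (hf.norm.continuousOn)
  have hη : 0 < ‖f x₀‖ := norm_pos_iff.mpr (hcon x₀ (KK_ne hx₀))
  set η := ‖f x₀‖ with hηdef
  have huc := (KK_compact n).uniformContinuousOn_of_continuous hf.continuousOn
  rw [Metric.uniformContinuousOn_iff] at huc
  obtain ⟨δ, hδ, huc⟩ := huc (η / 3) (by positivity)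
  obtain ⟨t, ht⟩ := exists_odd_sign (Fin (n + 1) → ℝ)
  let g : ℕ → (Fin (n + 1) → ℝ) → ℝ := fun i x => if h : i < n then f x ⟨i, h⟩ else 0
  have hg : ∀ i x, g i (-x) = - g i x := by
    intro i x; simp only [g]; split_ifs <;> simp [hodd]
  let s : ℕ → (Fin (n + 1) → ℝ) → ZMod 2 := fun i x =>
    if 0 < g i x then 1 else if g i x < 0 then 0 else t x
  have hs : ∀ k, ∀ x ∈ KK n n, s k (-x) = s k x + 1 := by
    intro k x hx
    simp only [s, hg]
    rcases lt_trichotomy (g k x) 0 with h | h | h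
    · simp [h, h.le, not_lt.mpr h.le]
    · simp [h, ht x (KK_ne hx)]
    · simp [h, not_lt.mpr h.le]; decide
  obtain ⟨h, hh, -, hW⟩ := exists_chain s hs n le_rfl (δ / 2) (by positivity)
  have : ev (W s n) h = 0 := by
    refine ev_eq_zero _ ?_ hh
    intro l hl
    by_contra hne
    have hW := W_ne s n l hne
    obtain ⟨x, hx⟩ : ∃ x, x ∈ l := by
      cases l with
      | nil => exact absurd (W_nil s n) hne
      | cons x l => exact ⟨x, by simp⟩
    have hclose : ∀ y ∈ l, ∀ z ∈ l, ∀ i, |f y i - f z i| ≤ η / 3 := by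
      intro y hy z hz i
      have := huc y (hl.1 y hy) z (hl.1 z hz) (lt_of_le_of_lt (hl.2 y hy z hz) (by linarith))
      rw [← Real.dist_eq]
      exact (dist_le_pi_dist (f y) (f z) i).trans this.le
    have hle : ‖f x‖ ≤ 2 * (η / 3) := by
      rw [pi_norm_le_iff_of_nonneg (by positivity)]
      intro i
      obtain ⟨y, hy, z, hz, hyz⟩ := hW i i.2
      have h1 := abs_le.mp (hclose y hy z hz i)
      have h2 := abs_le.mp (hclose x hx y hy i)
      have hgi : ∀ w, g i w = f w i := by intro w; simp [g]
      rw [Real.norm_eq_abs, abs_le]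
      by_cases hy0 : 0 < f y i
      · have : ¬ 0 < f z i := fun hz0 => hyz (by simp [s, hgi, hy0, hz0])
        constructor <;> linarith
      · by_cases hz0 : 0 < f z i
        · constructor <;> linarith
        · by_cases hy1 : f y i < 0
          · have : ¬ f z i < 0 := fun hz1 => hyz (by simp [s, hgi, hy0, hz0, hy1, hz1])
            constructor <;> linarith
          · constructor <;> linarith
    have : η ≤ ‖f x‖ := hmin (hl.1 x hx)
    linarith
  rw [this] at hW
  exact zero_ne_one hW

end

end BUproof

/-- if finitely many closed balls cover the unit sphere of an
infinite-dimensional Banach space, one of them contains an antipodal pair of unit vectors. -/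
theorem exists_antipodal_pair_of_finite_ball_cover
    {X : Type*} [NormedAddCommGroup X] [NormedSpace ℝ X] [CompleteSpace X]
    (hinf : ¬ FiniteDimensional ℝ X)
    (n : ℕ) (c : Fin n → X) (r : Fin n → ℝ)
    (hcover : Metric.sphere (0 : X) 1 ⊆ ⋃ i, Metric.closedBall (c i) (r i)) :
    ∃ i, ∃ y : X, ‖y‖ = 1 ∧ y ∈ Metric.closedBall (c i) (r i) ∧
      -y ∈ Metric.closedBall (c i) (r i) := by
  let b := Module.Basis.ofVectorSpace ℝ X
  have hI : Infinite (Module.Basis.ofVectorSpaceIndex ℝ X) := by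
    by_contra hfin
    rw [not_infinite_iff_finite] at hfin
    exact hinf (Module.Finite.of_basis b)
  let e : Fin (n + 1) → Module.Basis.ofVectorSpaceIndex ℝ X :=
    fun i => Infinite.natEmbedding _ i.val
  have he : Function.Injective e := fun i j h =>
    Fin.ext ((Infinite.natEmbedding _).injective h)
  have hli : LinearIndependent ℝ (b ∘ e) := b.linearIndependent.comp e he
  let L : (Fin (n + 1) → ℝ) →ₗ[ℝ] X := Fintype.linearCombination ℝ (b ∘ e)
  have hLinj : ∀ a, L a = 0 → a = 0 := by
    intro a ha
    funext i
    exact Fintype.linearIndependent_iff.mp hli a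
      (by simpa [L, Fintype.linearCombination_apply] using ha) i
  have hLc : Continuous L := L.continuous_of_finiteDimensional
  obtain ⟨a, ha, hfa⟩ := BUproof.borsuk_ulam n
    (fun a i => ‖L a - ‖L a‖ • c i‖ - ‖L a + ‖L a‖ • c i‖) (by fun_prop) (by
      intro x
      funext i
      simp only [map_neg, norm_neg, Pi.neg_apply]
      rw [← norm_neg (-L x - _), ← norm_neg (-L x + _)]
      rw [show -(-L x - ‖L x‖ • c i) = L x + ‖L x‖ • c i by abel,
        show -(-L x + ‖L x‖ • c i) = L x - ‖L x‖ • c i by abel]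
      ring)
  have hLa : 0 < ‖L a‖ := norm_pos_iff.mpr (fun h => ha (hLinj a h))
  set y : X := ‖L a‖⁻¹ • L a with hy
  have hy1 : ‖y‖ = 1 := by
    rw [hy, norm_smul, norm_inv, norm_norm, inv_mul_cancel₀ hLa.ne']
  have hyL : L a = ‖L a‖ • y := by
    rw [hy, smul_smul, mul_inv_cancel₀ hLa.ne', one_smul]
  have hsym : ∀ i, ‖y - c i‖ = ‖y + c i‖ := by
    intro i
    have h := congrFun hfa i
    simp only [Pi.zero_apply] at h
    have h1 : L a - ‖L a‖ • c i = ‖L a‖ • (y - c i) := by rw [smul_sub, ← hyL]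
    have h2 : L a + ‖L a‖ • c i = ‖L a‖ • (y + c i) := by rw [smul_add, ← hyL]
    rw [h1, h2, norm_smul, norm_smul, norm_norm, ← mul_sub] at h
    rcases mul_eq_zero.mp h with h | h
    · exact absurd h hLa.ne'
    · linarith
  obtain ⟨i, hi⟩ := Set.mem_iUnion.mp (hcover (by simpa using hy1 : y ∈ Metric.sphere (0 : X) 1))
  refine ⟨i, y, hy1, hi, ?_⟩
  rw [Metric.mem_closedBall, dist_eq_norm] at hi ⊢
  rw [← norm_neg, neg_sub, sub_neg_eq_add, add_comm, ← hsym]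
  exact hi
end

section
/- For 2 ≤ p < ∞ and each n ≥ 1, the 2n functions ±f_i with f_i = n^{1/p}·χ_{[(i−1)/n, i/n]} form a net in S_{L_p[0,1]} such that every f ∈ S_{L_p[0,1]} satisfies min over i and sign of ‖f ∓ f_i‖ ≤ ( (1/2)[(1 + n^{−1/p})^p + (1 − n^{−1/p})^p] + 1 )^{1/p}. Consequently T(L_p[0,1]) ≤ 2^{1/p} for 2 ≤ p < ∞. -/
open scoped ENNReal NNReal

/-- The thickness constant `T(X)`: the infimum of `ε > 0` such that finitely many closed
`ε`-balls centered at unit vectors cover the closed unit ball of `X`. -/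
noncomputable def thickness (X : Type*) [NormedAddCommGroup X] : ℝ :=
  sInf {ε : ℝ | 0 < ε ∧ ∃ F : Finset X, (∀ x ∈ F, ‖x‖ = 1) ∧
    ∀ y : X, ‖y‖ ≤ 1 → ∃ x ∈ F, ‖y - x‖ ≤ ε}

/-- Whitley's thickness constant `T_W(X)`: the infimum of `ε > 0` such that there is a finite
`ε`-net consisting of unit vectors for the unit sphere of `X`. -/
noncomputable def whitleyThickness (X : Type*) [NormedAddCommGroup X] : ℝ :=
  sInf {ε : ℝ | 0 < ε ∧ ∃ F : Finset X, (∀ x ∈ F, ‖x‖ = 1) ∧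
    ∀ y : X, ‖y‖ = 1 → ∃ x ∈ F, ‖y - x‖ ≤ ε}

open MeasureTheory

/-- The function `f_i = n^{1/p} · χ_{[(i)/n, (i+1)/n]}` (with `i : Fin n`, so the intervals are
`[(i−1)/n, i/n]` in one-based indexing) as an element of `L_p[0,1]`. -/
noncomputable def stepFn (p : ℝ≥0∞) (n : ℕ) (i : Fin n) :
    Lp ℝ p (volume.restrict (Set.Icc (0:ℝ) 1)) :=
  indicatorConstLp p
    (measurableSet_Icc : MeasurableSet (Set.Icc ((i : ℝ) / n) (((i : ℝ) + 1) / n)))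
    (measure_ne_top _ _) ((n : ℝ) ^ (1 / p.toReal))


noncomputable def Fh (p s r : ℝ) : ℝ :=
  ((1 + r) ^ (p-1) + (1 - r) ^ (p-1)) + ((1 + r) ^ (p-1) - (1 - r) ^ (p-1)) * r ^ (1-p) * s

lemma Fh_deriv (p s r : ℝ) (h0 : 0 < r) (h1 : r < 1) :
    HasDerivAt (Fh p s) ((p-1) * ((1 + r) ^ (p-2) - (1 - r) ^ (p-2)) * (1 - r ^ (-p) * s)) r := by
  have a : HasDerivAt (fun r : ℝ => (1 + r) ^ (p-1)) (1 * (p-1) * (1+r)^(p-1-1)) r :=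
    ((hasDerivAt_id r).const_add 1).rpow_const (Or.inl (by simp; linarith))
  have b : HasDerivAt (fun r : ℝ => (1 - r) ^ (p-1)) ((-1) * (p-1) * (1-r)^(p-1-1)) r :=
    ((hasDerivAt_id r).const_sub 1).rpow_const (Or.inl (by simp; linarith))
  have c : HasDerivAt (fun r : ℝ => r ^ (1-p)) (1 * (1-p) * r^(1-p-1)) r :=
    (hasDerivAt_id r).rpow_const (Or.inl h0.ne')
  have := (a.add b).add (((a.sub b).mul c).mul_const s)
  refine this.congr_deriv ?_
  have e1 : (1+r)^(p-1) = (1+r)^(p-2) * (1+r) := by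
    rw [← Real.rpow_add_one (by linarith)]; ring_nf
  have e2 : (1-r)^(p-1) = (1-r)^(p-2) * (1-r) := by
    rw [← Real.rpow_add_one (by linarith)]; ring_nf
  have e3 : r^(1-p) = r^(-p) * r := by
    rw [← Real.rpow_add_one h0.ne']; ring_nf
  simp only [e1, e2, e3, Pi.sub_apply, show p-1-1 = p-2 by ring, show 1-p-1 = -p by ring]
  ring

lemma Fh_cont (p s : ℝ) (hp : 2 ≤ p) : ContinuousOn (Fh p s) (Set.Ioc 0 1) := by
  unfold Fh
  have a : ContinuousOn (fun r : ℝ => (1 + r) ^ (p-1)) (Set.Ioc 0 1) :=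
    (by fun_prop : ContinuousOn (fun r : ℝ => 1 + r) _).rpow_const (fun x _ => Or.inr (by linarith))
  have b : ContinuousOn (fun r : ℝ => (1 - r) ^ (p-1)) (Set.Ioc 0 1) :=
    (by fun_prop : ContinuousOn (fun r : ℝ => 1 - r) _).rpow_const (fun x _ => Or.inr (by linarith))
  have c : ContinuousOn (fun r : ℝ => r ^ (1-p)) (Set.Ioc 0 1) :=
    continuousOn_id.rpow_const (fun x hx => Or.inl hx.1.ne')
  exact (a.add b).add (((a.sub b).mul c).mul continuousOn_const)

lemma Fh_aux (p r : ℝ) (hp : 2 ≤ p) (h0 : 0 < r) (h1 : r < 1) :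
    0 ≤ (p-1) * ((1 + r) ^ (p-2) - (1 - r) ^ (p-2)) := by
  have : (1-r)^(p-2) ≤ (1+r)^(p-2) :=
    Real.rpow_le_rpow (by linarith) (by linarith) (by linarith)
  exact mul_nonneg (by linarith) (by linarith)

/-- Antitone on `(0, x]`-like intervals, where `r ^ p ≤ s`. -/
lemma Fh_anti (p x : ℝ) (hp : 2 ≤ p) {r q : ℝ} (h0 : 0 < r) (hrq : r ≤ q) (hq : q ≤ 1)
    (hx : q ≤ x) : Fh p (x^p) q ≤ Fh p (x^p) r := by
  refine antitoneOn_of_deriv_nonpos (convex_Icc r q)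
    ((Fh_cont p _ hp).mono fun y hy => ⟨h0.trans_le hy.1, hy.2.trans hq⟩) ?_ ?_
    (Set.left_mem_Icc.2 hrq) (Set.right_mem_Icc.2 hrq) hrq
  · intro y hy
    rw [interior_Icc] at hy
    exact (Fh_deriv p _ y (h0.trans hy.1) (hy.2.trans_le hq)).differentiableAt.differentiableWithinAt
  · intro y hy
    rw [interior_Icc] at hy
    have hy0 := h0.trans hy.1
    rw [(Fh_deriv p _ y hy0 (hy.2.trans_le hq)).deriv]
    refine mul_nonpos_of_nonneg_of_nonpos (Fh_aux p y hp hy0 (hy.2.trans_le hq)) ?_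
    have : y^p ≤ x^p := Real.rpow_le_rpow hy0.le (hy.2.le.trans hx) (by linarith)
    rw [Real.rpow_neg hy0.le, sub_nonpos, ← div_eq_inv_mul, one_le_div (by positivity)]
    exact this

lemma Fh_mono (p x : ℝ) (hp : 2 ≤ p) {r q : ℝ} (hx0 : 0 ≤ x) (h0 : 0 < r) (hrq : r ≤ q) (hq : q ≤ 1)
    (hx : x ≤ r) : Fh p (x^p) r ≤ Fh p (x^p) q := by
  refine monotoneOn_of_deriv_nonneg (convex_Icc r q)
    ((Fh_cont p _ hp).mono fun y hy => ⟨h0.trans_le hy.1, hy.2.trans hq⟩) ?_ ?_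
    (Set.left_mem_Icc.2 hrq) (Set.right_mem_Icc.2 hrq) hrq
  · intro y hy
    rw [interior_Icc] at hy
    exact (Fh_deriv p _ y (h0.trans hy.1) (hy.2.trans_le hq)).differentiableAt.differentiableWithinAt
  · intro y hy
    rw [interior_Icc] at hy
    have hy0 := h0.trans hy.1
    rw [(Fh_deriv p _ y hy0 (hy.2.trans_le hq)).deriv]
    refine mul_nonneg (Fh_aux p y hp hy0 (hy.2.trans_le hq)) ?_
    have : x^p ≤ y^p := Real.rpow_le_rpow hx0 (hx.trans hy.1.le) (by linarith)
    rw [Real.rpow_neg hy0.le, sub_nonneg, ← div_eq_inv_mul, div_le_one (by positivity)]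
    exact this

lemma Fh_self (p x : ℝ) (hp : 2 ≤ p) (h0 : 0 < x) (h1 : x ≤ 1) :
    Fh p (x^p) x = (1+x)^p + (1-x)^p := by
  have e1 : (1+x)^p = (1+x)^(p-1) * (1+x) := by
    rw [← Real.rpow_add_one (by linarith)]; ring_nf
  have e2 : (1-x)^p = (1-x)^(p-1) * (1-x) := by
    rcases h1.eq_or_lt with rfl | h
    · simp [Real.zero_rpow (show p ≠ 0 by linarith)]
    · rw [← Real.rpow_add_one (by linarith)]; ring_nf
  have e3 : x^(1-p) * x^p = x := by
    rw [← Real.rpow_add h0]; simp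
  rw [e1, e2, Fh, mul_assoc, e3]; ring

lemma Fh_le1 (p x r : ℝ) (hp : 2 ≤ p) (h0 : 0 ≤ x) (h1 : x ≤ 1) (hr : 0 < r) (hr1 : r ≤ 1) :
    (1+x)^p + (1-x)^p ≤ Fh p (x^p) r := by
  rcases h0.eq_or_lt with rfl | h0
  · have hc := Fh_self p 1 hp one_pos le_rfl
    simp only [Fh, Real.zero_rpow (show p ≠ 0 by linarith)]
    simp only [add_zero, sub_zero, Real.one_rpow, mul_zero]
    -- convexity: 2 ≤ (1+r)^(p-1) + (1-r)^(p-1)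
    have a := one_add_mul_self_le_rpow_one_add (s := r) (by linarith) (p := p-1) (by linarith)
    have b := one_add_mul_self_le_rpow_one_add (s := -r) (by linarith) (p := p-1) (by linarith)
    rw [← sub_eq_add_neg 1 r] at b
    linarith
  · rw [← Fh_self p x hp h0 h1]
    rcases le_total x r with h | h
    · exact Fh_mono p x hp h0.le h0 h hr1 le_rfl
    · exact Fh_anti p x hp hr h h1 le_rfl

lemma Fh_le (p x r : ℝ) (hp : 2 ≤ p) (h0 : 0 ≤ x) (hr : 0 < r) (hr1 : r ≤ 1) :
    (1+x)^p + |1-x|^p ≤ Fh p (x^p) r := by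
  rcases le_total x 1 with h1 | h1
  · rw [abs_of_nonneg (by linarith)]; exact Fh_le1 p x r hp h0 h1 hr hr1
  · refine le_trans ?_ (Fh_anti p x hp hr hr1 le_rfl h1)
    have hx : 0 < x := by linarith
    have := Fh_le1 p x⁻¹ 1 hp (by positivity) (inv_le_one_of_one_le₀ h1) one_pos le_rfl
    have hxp : 0 < x^p := by positivity
    have e1 : (1+x)^p = x^p * (1+x⁻¹)^p := by
      rw [← Real.mul_rpow hx.le (by positivity)]; congr 1; field_simp; ring
    have e2 : |1-x|^p = x^p * (1-x⁻¹)^p := by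
      rw [← Real.mul_rpow hx.le (sub_nonneg.2 (inv_le_one_of_one_le₀ h1)), abs_of_nonpos (by linarith)]
      congr 1; field_simp; ring
    have e3 : Fh p (x^p) 1 = x^p * Fh p (x⁻¹^p) 1 := by
      simp only [Fh, Real.inv_rpow hx.le, sub_self, Real.zero_rpow (show p - 1 ≠ 0 by linarith), Real.one_rpow]
      field_simp; ring
    rw [e1, e2, e3, ← mul_add]
    gcongr

lemma hanner_pt (p y v r : ℝ) (hp : 2 ≤ p) (hv : 0 < v) (hr : 0 < r) (hr1 : r ≤ 1) :
    |y + v|^p + |y - v|^p ≤ ((1 + r) ^ (p-1) + (1 - r) ^ (p-1)) * v^p +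
      ((1 + r) ^ (p-1) - (1 - r) ^ (p-1)) * r ^ (1-p) * |y|^p := by
  have key := Fh_le p (|y|/v) r hp (by positivity) hr hr1
  have e : |y + v|^p + |y - v|^p = (|y|+v)^p + |(|y|-v)|^p := by
    rcases le_total 0 y with h | h
    · rw [abs_of_nonneg h, abs_of_nonneg (a := y + v) (by linarith)]
    · rw [abs_of_nonpos h, add_comm, ← abs_neg (y-v), abs_of_nonneg (a := -(y - v)) (by linarith),
        ← abs_neg (y+v)]
      ring_nf
  have e1 : (|y|+v)^p = v^p * (1+|y|/v)^p := by
    rw [← Real.mul_rpow hv.le (by positivity)]; congr 1; field_simp; ring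
  have e2 : |(|y|-v)|^p = v^p * |1-|y|/v|^p := by
    rw [← Real.mul_rpow hv.le (by positivity)]; congr 1
    rw [abs_sub_comm]
    nth_rewrite 2 [← abs_of_pos hv]
    rw [← abs_mul]; congr 1; field_simp
  rw [e, e1, e2, ← mul_add]
  refine (mul_le_mul_of_nonneg_left key (by positivity)).trans (le_of_eq ?_)
  have : 0 < v^p := by positivity
  rw [Fh, Real.div_rpow (by positivity) hv.le]
  field_simp

lemma norm_rpow_Lp (p : ℝ≥0∞) (hp2 : 2 ≤ p) (hp : p ≠ ⊤)
    (f : Lp ℝ p (volume.restrict (Set.Icc (0:ℝ) 1))) :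
    ‖f‖ ^ p.toReal = ∫ x in Set.Icc (0:ℝ) 1, |f x| ^ p.toReal := by
  have h0 : p ≠ 0 := by rintro rfl; simp at hp2
  have ht : 0 < p.toReal := ENNReal.toReal_pos h0 hp
  have hn : 0 ≤ ∫ x in Set.Icc (0:ℝ) 1, |f x| ^ p.toReal :=
    integral_nonneg fun x => by positivity
  rw [Lp.norm_def, (Lp.memLp f).eLpNorm_eq_integral_rpow_norm h0 hp]
  simp only [Real.norm_eq_abs]
  rw [ENNReal.toReal_ofReal (by positivity), Real.rpow_inv_rpow hn ht.ne']

lemma int_rpow_Lp (p : ℝ≥0∞) (f : Lp ℝ p (volume.restrict (Set.Icc (0:ℝ) 1))) :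
    Integrable (fun x => |f x| ^ p.toReal) (volume.restrict (Set.Icc (0:ℝ) 1)) := by
  simpa only [Real.norm_eq_abs] using (Lp.memLp f).integrable_norm_rpow'

lemma step_sub (n : ℕ) (hn : 1 ≤ n) (i : ℕ) (hi : i < n) :
    Set.Icc ((i : ℝ) / n) (((i : ℝ) + 1) / n) ⊆ Set.Icc (0:ℝ) 1 := by
  have : (0:ℝ) < n := by exact_mod_cast hn
  apply Set.Icc_subset_Icc (by positivity)
  rw [div_le_one this]
  exact_mod_cast hi

lemma step_meas (n : ℕ) (hn : 1 ≤ n) (i : ℕ) (hi : i < n) :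
    (volume.restrict (Set.Icc (0:ℝ) 1)).real (Set.Icc ((i : ℝ) / n) (((i : ℝ) + 1) / n)) = 1 / n := by
  have : (0:ℝ) < n := by exact_mod_cast hn
  rw [measureReal_restrict_apply measurableSet_Icc,
    Set.inter_eq_left.2 (step_sub n hn i hi), Real.volume_real_Icc_of_le (by gcongr; linarith)]
  ring

lemma step_norm (p : ℝ≥0∞) (hp2 : 2 ≤ p) (hp : p ≠ ⊤) (n : ℕ) (hn : 1 ≤ n) (i : Fin n) :
    ‖stepFn p n i‖ = 1 := by
  have h0 : p ≠ 0 := by rintro rfl; simp at hp2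
  have : (0:ℝ) < n := by exact_mod_cast hn
  rw [stepFn, norm_indicatorConstLp h0 hp, step_meas n hn i i.2, Real.norm_of_nonneg (by positivity),
    ← Real.mul_rpow (by positivity) (by positivity), mul_one_div_cancel this.ne', Real.one_rpow]

lemma exists_small (g : ℝ → ℝ) (hg : IntegrableOn g (Set.Icc (0:ℝ) 1))
    (h1 : ∫ x in Set.Icc (0:ℝ) 1, g x ≤ 1) (n : ℕ) (hn : 1 ≤ n) :
    ∃ i : Fin n, ∫ x in Set.Icc ((i : ℝ) / n) (((i : ℝ) + 1) / n), g x ≤ 1 / n := by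
  have hn0 : (0:ℝ) < n := by exact_mod_cast hn
  have hle : ∀ i : ℕ, (i : ℝ) / n ≤ ((i : ℝ) + 1) / n := fun i => by gcongr; linarith
  have hs := intervalIntegral.sum_integral_adjacent_intervals (f := g) (μ := volume)
    (a := fun i : ℕ => (i : ℝ) / n) (n := n) (fun k hk => by
      simp only [Nat.cast_add, Nat.cast_one]
      rw [intervalIntegrable_iff_integrableOn_Icc_of_le (hle k)]
      exact hg.mono_set (step_sub n hn k hk))
  simp only [Nat.cast_zero, zero_div, div_self hn0.ne', Nat.cast_add, Nat.cast_one] at hs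
  rw [intervalIntegral.integral_of_le zero_le_one, ← integral_Icc_eq_integral_Ioc] at hs
  by_contra! hc
  have : ∑ k ∈ Finset.range n, (1 / n : ℝ) <
      ∑ k ∈ Finset.range n, ∫ x in ((k : ℝ) / n)..(((k : ℝ) + 1) / n), g x := by
    refine Finset.sum_lt_sum_of_nonempty (by simp; omega) fun k hk => ?_
    rw [intervalIntegral.integral_of_le (hle k), ← integral_Icc_eq_integral_Ioc]
    exact hc ⟨k, Finset.mem_range.1 hk⟩
  rw [hs] at this
  simp [hn0.ne'] at this
  linarith

lemma net_est (p : ℝ≥0∞) [Fact (1 ≤ p)] (hp2 : 2 ≤ p) (hp : p ≠ ⊤) (n : ℕ) (hn : 1 ≤ n)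
    (f : Lp ℝ p (volume.restrict (Set.Icc (0:ℝ) 1))) (hf : ‖f‖ ≤ 1) :
      ∃ i : Fin n, min ‖f - stepFn p n i‖ ‖f + stepFn p n i‖ ≤
        ((1 / 2) * ((1 + ((n : ℝ) ^ (1 / p.toReal))⁻¹) ^ p.toReal
            + (1 - ((n : ℝ) ^ (1 / p.toReal))⁻¹) ^ p.toReal) + 1) ^ (1 / p.toReal) := by
  have hn0 : (0:ℝ) < n := by exact_mod_cast hn
  have hn1 : (1:ℝ) ≤ n := by exact_mod_cast hn
  have hN := norm_rpow_Lp p hp2 hp f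
  have hq : 2 ≤ p.toReal := by
    simpa using (ENNReal.toReal_le_toReal (by simp) hp).2 hp2
  set q := p.toReal with hqdef
  have hfi := int_rpow_Lp p f
  have hf1 : ∫ x in Set.Icc (0:ℝ) 1, |f x| ^ q ≤ 1 := by
    rw [← hN]; exact Real.rpow_le_one (norm_nonneg _) hf (by linarith)
  obtain ⟨i, hi⟩ := exists_small _ hfi hf1 n hn
  refine ⟨i, ?_⟩
  have hsub := step_sub n hn i i.2
  set I := Set.Icc ((i : ℝ) / n) (((i : ℝ) + 1) / n) with hI
  set v : ℝ := (n:ℝ) ^ (1/q) with hv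
  have hv1 : 1 ≤ v := Real.one_le_rpow hn1 (by positivity)
  have hv0 : 0 < v := by linarith
  have hr0 : 0 < v⁻¹ := by positivity
  have hr1 : v⁻¹ ≤ 1 := inv_le_one_of_one_le₀ hv1
  have hvq : v ^ q = n := by
    rw [hv, one_div, Real.rpow_inv_rpow hn0.le (by linarith)]
  set r := v⁻¹ with hr
  have hrq : r ^ q = 1 / n := by rw [hr, Real.inv_rpow hv0.le, hvq, one_div]
  set α := (1 + r) ^ (q-1) + (1 - r) ^ (q-1) with hα
  set β := ((1 + r) ^ (q-1) - (1 - r) ^ (q-1)) * r ^ (1-q) with hβ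
  have hβ0 : 0 ≤ β := by
    apply mul_nonneg _ (by positivity)
    rw [sub_nonneg]
    exact Real.rpow_le_rpow (by linarith) (by linarith) (by linarith)
  have hself : α + β * (1 / n) = (1+r)^q + (1-r)^q := by
    rw [← Fh_self q r hq hr0 hr1, Fh, hrq]
  set s := stepFn p n i with hs
  have hpt : ∀ᵐ x ∂(volume.restrict (Set.Icc (0:ℝ) 1)),
      |(f + s) x| ^ q + |(f - s) x| ^ q ≤
        I.indicator (fun x => α * n + β * |f x| ^ q) x + 2 * |f x| ^ q := by
    have hsx : s =ᵐ[volume.restrict (Set.Icc (0:ℝ) 1)] I.indicator fun _ => v :=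
      indicatorConstLp_coeFn
    filter_upwards [hsx, Lp.coeFn_add f s, Lp.coeFn_sub f s] with x h1 h2 h3
    rw [h2, h3, Pi.add_apply, Pi.sub_apply, h1]
    by_cases hx : x ∈ I
    · simp only [Set.indicator_of_mem hx]
      have := hanner_pt q (f x) v r hq hv0 hr0 hr1
      rw [hvq] at this
      have h4 : 0 ≤ |f x| ^ q := by positivity
      linarith
    · simp only [Set.indicator_of_notMem hx]
      simp; linarith
  have hgi : Integrable (fun x => α * n + β * |f x| ^ q) (volume.restrict (Set.Icc (0:ℝ) 1)) :=
    (integrable_const _).add (hfi.const_mul β)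
  have hint := integral_mono_ae ((int_rpow_Lp p (f+s)).add (int_rpow_Lp p (f-s)))
    ((hgi.indicator (measurableSet_Icc : MeasurableSet I)).add (hfi.const_mul 2)) hpt
  have e1 := integral_add (int_rpow_Lp p (f+s)) (int_rpow_Lp p (f-s))
  have e2 := integral_add (hgi.indicator (measurableSet_Icc : MeasurableSet I)) (hfi.const_mul 2)
  rw [integral_indicator measurableSet_Icc, integral_const_mul,
    integral_add (integrable_const _) (hfi.const_mul β).integrableOn, integral_const_mul,
    setIntegral_const, step_meas n hn i i.2,
    Measure.restrict_restrict measurableSet_Icc, Set.inter_eq_left.2 hsub] at e2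
  have hsum : ‖f+s‖ ^ q + ‖f-s‖ ^ q ≤ (1+r)^q + (1-r)^q + 2 := by
    rw [norm_rpow_Lp p hp2 hp, norm_rpow_Lp p hp2 hp, ← hself]
    refine (e1.symm.le.trans (hint.trans e2.le)).trans ?_
    have h5 : β * ∫ x in I, |f x| ^ q ≤ β * (1 / n) := mul_le_mul_of_nonneg_left hi hβ0
    have h6 : α * (1 / (n:ℝ)) • (n:ℝ) = α := by
      rw [smul_eq_mul]; field_simp
    rw [h6, integral_const_mul, ← hqdef]
    linarith
  have h1r : 0 ≤ 1 - r := by linarith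
  rw [one_div q, Real.le_rpow_inv_iff_of_pos (le_min (norm_nonneg _) (norm_nonneg _))
    (by positivity) (by linarith)]
  have hm1 : (min ‖f - s‖ ‖f + s‖) ^ q ≤ ‖f - s‖ ^ q :=
    Real.rpow_le_rpow (le_min (norm_nonneg _) (norm_nonneg _)) (min_le_left _ _) (by linarith)
  have hm2 : (min ‖f - s‖ ‖f + s‖) ^ q ≤ ‖f + s‖ ^ q :=
    Real.rpow_le_rpow (le_min (norm_nonneg _) (norm_nonneg _)) (min_le_right _ _) (by linarith)
  linarith

lemma thickness_le_n (p : ℝ≥0∞) [Fact (1 ≤ p)] (hp2 : 2 ≤ p) (hp : p ≠ ⊤) (n : ℕ) (hn : 1 ≤ n) :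
    thickness (Lp ℝ p (volume.restrict (Set.Icc (0:ℝ) 1))) ≤
        ((1 / 2) * ((1 + ((n : ℝ) ^ (1 / p.toReal))⁻¹) ^ p.toReal
            + (1 - ((n : ℝ) ^ (1 / p.toReal))⁻¹) ^ p.toReal) + 1) ^ (1 / p.toReal) := by
  classical
  refine csInf_le ⟨0, fun ε h => h.1.le⟩ ⟨?_, ?_⟩
  · have hn1 : (1:ℝ) ≤ n := by exact_mod_cast hn
    have hr1 : ((n : ℝ) ^ (1 / p.toReal))⁻¹ ≤ 1 :=
      inv_le_one_of_one_le₀ (Real.one_le_rpow hn1 (by positivity))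
    have h1r : 0 ≤ 1 - ((n : ℝ) ^ (1 / p.toReal))⁻¹ := by linarith
    positivity
  · refine ⟨Finset.univ.image (fun i => stepFn p n i) ∪ Finset.univ.image (fun i => - stepFn p n i),
      ?_, ?_⟩
    · intro x hx
      simp only [Finset.mem_union, Finset.mem_image, Finset.mem_univ, true_and] at hx
      rcases hx with ⟨i, rfl⟩ | ⟨i, rfl⟩
      · exact step_norm p hp2 hp n hn i
      · rw [norm_neg]; exact step_norm p hp2 hp n hn i
    · intro y hy
      obtain ⟨i, hi⟩ := net_est p hp2 hp n hn y hy
      rcases min_le_iff.1 hi with h | h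
      · exact ⟨stepFn p n i, by simp, h⟩
      · exact ⟨-stepFn p n i, by simp, by rwa [sub_neg_eq_add]⟩

/-- for `2 ≤ p < ∞` the `2n` functions `±f_i` give the stated covering estimate
on the unit sphere of `L_p[0,1]`; consequently `T(L_p[0,1]) ≤ 2^{1/p}`. -/
theorem step_net_estimate_and_thickness_Lp_le
    (p : ℝ≥0∞) [Fact (1 ≤ p)] (hp2 : 2 ≤ p) (hp : p ≠ ⊤) (n : ℕ) (hn : 1 ≤ n) :
    (∀ i, ‖stepFn p n i‖ = 1) ∧
    (∀ f : Lp ℝ p (volume.restrict (Set.Icc (0:ℝ) 1)), ‖f‖ = 1 →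
      ∃ i : Fin n, min ‖f - stepFn p n i‖ ‖f + stepFn p n i‖ ≤
        ((1 / 2) * ((1 + ((n : ℝ) ^ (1 / p.toReal))⁻¹) ^ p.toReal
            + (1 - ((n : ℝ) ^ (1 / p.toReal))⁻¹) ^ p.toReal) + 1) ^ (1 / p.toReal)) ∧
    thickness (Lp ℝ p (volume.restrict (Set.Icc (0:ℝ) 1))) ≤ 2 ^ (1 / p.toReal) := by
  refine ⟨step_norm p hp2 hp n hn, fun f hf => net_est p hp2 hp n hn f hf.le, ?_⟩
  have hq : 2 ≤ p.toReal := by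
    simpa using (ENNReal.toReal_le_toReal (by simp) hp).2 hp2
  have hr : Filter.Tendsto (fun n : ℕ => ((n : ℝ) ^ (1 / p.toReal))⁻¹) Filter.atTop (nhds 0) :=
    ((tendsto_rpow_atTop (by positivity)).comp tendsto_natCast_atTop_atTop).inv_tendsto_atTop
  have hc : Continuous (fun r : ℝ => ((1 / 2) * ((1 + r) ^ p.toReal
            + (1 - r) ^ p.toReal) + 1) ^ (1 / p.toReal)) := by
    have a : Continuous fun r : ℝ => (1 + r) ^ p.toReal :=
      (by fun_prop : Continuous fun r : ℝ => 1 + r).rpow_const fun _ => Or.inr (by linarith)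
    have b : Continuous fun r : ℝ => (1 - r) ^ p.toReal :=
      (by fun_prop : Continuous fun r : ℝ => 1 - r).rpow_const fun _ => Or.inr (by linarith)
    exact (((a.add b).const_mul (1/2)).add continuous_const).rpow_const
      fun _ => Or.inr (by positivity)
  have ht := (hc.tendsto 0).comp hr
  have h2 : ((1 / 2) * ((1 + (0:ℝ)) ^ p.toReal
            + (1 - (0:ℝ)) ^ p.toReal) + 1) ^ (1 / p.toReal) = 2 ^ (1 / p.toReal) := by
    simp only [add_zero, sub_zero, Real.one_rpow]; norm_num
  rw [h2] at ht
  refine ge_of_tendsto ht ?_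
  filter_upwards [Filter.eventually_ge_atTop 1] with m hm
  exact thickness_le_n p hp2 hp m hm
end
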